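/- Let p be a prime, n a natural number, and A = ℤ[x₁, …, xₙ] the polynomial ring over ℤ. Let 𝔪 be the ideal of A generated by p together with the variables x₁, …, xₙ, and let M be a finitely generated A-module annihilated by some power of 𝔪 (so M is in particular a finite abelian p-group). Then Ext_A^i(M, A) = 0 for all i ≠ n + 1, and Ext_A^{n+1}(M, A) is isomorphic, as an A-module, to the Pontryagin dual Hom_ℤ(M, ℚ/ℤ), where A acts on Hom_ℤ(M, ℚ/ℤ) through its action on M. -/

import Mathlib

/-!
Write `Coind R A N` for the `A`-module `Hom_R(A, N)`. The proof produces, for each step of the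
tower `ℤ, ℤ[x₁], ℤ[x₁, x₂], …`, a short exact sequence of coinduced modules whose middle term has
no `Ext` from a torsion module.

* If `A` is projective over `R[X]`, taking the residue (the coefficient of `X⁻¹`) gives a short
  exact sequence
  `0 → Coind R[X] A R[X] → Coind R[X] A R((X⁻¹)) → Coind R A R → 0`, and `X` acts bijectively on
  the middle term (`coind_residue_injective`, `coind_residue_exact`, `coind_residue_surjective`).
* If `A` is projective over `ℤ`, there is the short exact sequence
  `0 → Coind ℤ A ℤ → Coind ℤ A ℚ → Coind ℤ A (ℚ/ℤ) → 0`, and `p` acts bijectively on the middle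
  term.

When a power of `a` kills `M` and `a` acts bijectively on `L`, every `Ext^i(M, L)` vanishes, since
`a` acts on it both nilpotently and injectively. Each of the sequences therefore shifts the degree
of `Ext(M, -)` by one (`ext_shift`). The last module `Coind ℤ A (ℚ/ℤ)` is injective and represents
`M ↦ Hom_ℤ(M, ℚ/ℤ)`, so its `Ext(M, -)` is the Pontryagin dual in degree `0`. After `n + 1` shifts
this computes `Ext_A(M, Coind A A A)`, and `Coind A A A` is `A`. The induction along the tower is
carried by the predicate `TorsionDuality`, which allows an arbitrary free extension `A` of the base
ring. Finally `ext_bridge` compares the derived-functor `Ext` with `CategoryTheory.Abelian.Ext`,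
where the long exact sequences live.
-/

open CategoryTheory

/-- `extA A i M N` is the `A`-module `Ext_A^i(M, N)`, computed in the abelian category of
`A`-modules via the derived functor `Ext` bifunctor. -/
noncomputable abbrev extA (A : Type) [CommRing A] (i : ℕ) (M N : Type)
    [AddCommGroup M] [Module A M] [AddCommGroup N] [Module A N] : ModuleCat A :=
  ((Ext A (ModuleCat A) i).obj (Opposite.op (ModuleCat.of A M))).obj (ModuleCat.of A N)

/-- `ℚ/ℤ`: the quotient of `ℚ` by the image of the canonical map `ℤ → ℚ`. -/
abbrev QmodZ : Type := ℚ ⧸ LinearMap.range (Algebra.linearMap ℤ ℚ)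

/-- For a commutative ring `A` and an `A`-module `M`, the Pontryagin dual
`Hom_ℤ(M, ℚ/ℤ)` is an `A`-module through the `A`-action on `M`: `(a • f) m = f (a • m)`. -/
noncomputable instance pontryaginDualModule (A M : Type) [CommRing A]
    [AddCommGroup M] [Module A M] :
    Module A (M →ₗ[ℤ] QmodZ) where
  smul a f := f.comp ((LinearMap.lsmul A M a).restrictScalars ℤ)
  one_smul f := by ext m; show f ((1 : A) • m) = f m; rw [one_smul]
  mul_smul a b f := by
    ext m
    show f ((a * b) • m) = f (b • a • m)
    rw [mul_comm, mul_smul]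
  smul_zero a := by ext m; rfl
  smul_add a f g := by ext m; rfl
  add_smul a b f := by
    ext m
    show f ((a + b) • m) = f (a • m) + f (b • m)
    rw [add_smul, map_add]
  zero_smul f := by ext m; show f ((0 : A) • m) = 0; rw [zero_smul, map_zero]

namespace ExtDuality
open CategoryTheory CochainComplex.HomComplex Polynomial

/-! ### Comparison of the two constructions of `Ext` -/

/-- In degree `0` a cocycle out of a projective resolution represents the zero class only if it
vanishes, because the resolution has no term in cohomological degree `1`. -/
theorem extMk_zero_eq_zero {C : Type*} [Category* C] [Abelian C] [HasExt C] {X Y : C}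
    (P : ProjectiveResolution X) (f : P.complex.X 0 ⟶ Y) (hf : P.complex.d 1 0 ≫ f = 0)
    (h : P.extMk f 1 rfl hf = 0) : f = 0 := by
  rw [← P.extEquivCohomologyClass.apply_eq_iff_eq,
    P.extEquivCohomologyClass_extMk, P.extEquivCohomologyClass_zero,
    CohomologyClass.mk_eq_zero_iff,
    Cocycle.toSingleMk_mem_coboundaries_iff _ _ _ _ _ 1 (by simp)] at h
  obtain ⟨g, hg⟩ := h
  have : g = 0 := (P.cochainComplex.isZero_of_isStrictlyLE 0 1 (by simp)).eq_of_src _ _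
  rw [this, Limits.comp_zero] at hg
  rw [← cancel_epi (P.cochainComplexXIso (-(0:ℕ)) 0 rfl).hom, ← hg, Limits.comp_zero]

/-- The derived-functor `Ext` of `A`-modules agrees `A`-linearly with `Abelian.Ext`: both are
the `n`-cocycles of `Hom(P, Y)`, for a projective resolution `P` of `X`, modulo coboundaries. -/
theorem ext_bridge {A : Type} [CommRing A] (X Y : ModuleCat.{0} A) (n : ℕ) :
    Nonempty ((((_root_.Ext A (ModuleCat.{0} A) n).obj (Opposite.op X)).obj Y) ≃ₗ[A]
      Abelian.Ext X Y n) := by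
  let P := projectiveResolution X
  let K := P.complex.linearYonedaObj A Y
  let i := (ComplexShape.up ℕ).prev n
  let S := K.sc' i n (n + 1)
  -- A cocycle is sent to the class it represents in `Abelian.Ext`; its kernel is computed below.
  let φ : LinearMap.ker S.g.hom →ₗ[A] Abelian.Ext X Y n :=
    { toFun := fun f => P.extMk (n := n) (Y := Y) f.1 (n + 1) rfl f.2
      map_add' := fun f g => (P.add_extMk _ _ _ _ _ _).symm
      map_smul' := fun r f => by
        have key (g : P.complex.X n ⟶ Y) : g ≫ (r • 𝟙 Y) = r • g := by
          rw [Linear.comp_smul, Category.comp_id]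
        rw [RingHom.id_apply, Abelian.Ext.smul_eq_comp_mk₀]
        refine Eq.trans ?_ (P.extMk_comp_mk₀ (Y := Y) f.1 (n + 1) rfl f.2 (r • 𝟙 Y)).symm
        congr 1 }
  have hφ : Function.Surjective φ := by
    intro x
    obtain ⟨f, hf, rfl⟩ := P.extMk_surjective x (n + 1) rfl
    exact ⟨⟨f, hf⟩, rfl⟩
  have hker : LinearMap.ker φ = LinearMap.range S.moduleCatToCycles := by
    ext ⟨f, hf⟩
    have h1 : (⟨f, hf⟩ : LinearMap.ker S.g.hom) ∈ LinearMap.ker φ ↔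
      P.extMk (n := n) (Y := Y) f (n + 1) rfl hf = 0 := Iff.rfl
    rw [h1]
    cases n with
    | zero =>
      -- Here `prev 0 = 0` is a junk value; the differential `0 ⟶ 0` it gives is zero.
      have hi : i = 0 := by simp [i]
      constructor
      · intro h
        refine ⟨0, Subtype.ext ?_⟩
        rw [map_zero]
        exact (extMk_zero_eq_zero P f hf h).symm
      · rintro ⟨g, hg⟩
        have h2 : S.f = 0 := K.shape _ _ (by simp [i])
        have h3 : f = 0 := by
          have := congrArg Subtype.val hg
          change S.f.hom g = f at this
          rw [← this, h2]; rfl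
        subst h3
        exact P.extMk_zero _ _
    | succ n =>
      have hi : i = n := by simp [i]
      rw [P.extMk_eq_zero_iff (Y := Y) f _ rfl hf n rfl]
      clear_value i
      subst hi
      constructor
      · rintro ⟨g, hg⟩
        exact ⟨g, Subtype.ext hg⟩
      · rintro ⟨g, hg⟩
        exact ⟨g, congrArg Subtype.val hg⟩
  let e1 := (P.isoExt (R := A) n Y ≪≫ K.homologyIsoSc' i n (n + 1) rfl (by simp) ≪≫
    S.moduleCatHomologyIso).toLinearEquiv
  exact ⟨e1.trans ((Submodule.quotEquivOfEq _ _ hker.symm).trans (φ.quotKerEquivOfSurjective hφ))⟩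

/-! ### Dimension shifting for torsion modules -/

section Shift
variable {A : Type} [CommRing A]

/-- If a power of `a` kills `M` and `a` acts bijectively on `L`, then `Ext^i(M, L) = 0`: the action
of `a` on this group is nilpotent through `M` and injective through `L`. -/
theorem ext_subsingleton_of_nilpotent_of_bijective {M L : ModuleCat.{0} A} (a : A)
    (hL : Function.Bijective fun x : L => a • x) (t : ℕ) (hM : ∀ m : M, a ^ t • m = 0) (i : ℕ) :
    Subsingleton (Abelian.Ext M L i) := by
  have hiso : IsIso (a • 𝟙 L) := by
    rw [← isIso_iff_of_reflects_iso _ (forget (ModuleCat A)), isIso_iff_bijective]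
    exact hL
  have hinj (x : Abelian.Ext M L i) (hx : a • x = 0) : x = 0 := by
    rw [Abelian.Ext.smul_eq_comp_mk₀] at hx
    have := congrArg (fun y => y.comp (Abelian.Ext.mk₀ (inv (a • 𝟙 L))) (add_zero i)) hx
    simpa using this
  have hzero (x : Abelian.Ext M L i) : a ^ t • x = 0 := by
    have : a ^ t • 𝟙 M = 0 := by
      ext m
      exact hM m
    have h2 : a ^ t • x = (Abelian.Ext.mk₀ (a ^ t • 𝟙 M)).comp x (zero_add i) := by
      simp [Abelian.Ext.mk₀_smul]
    rw [h2, this]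
    simp
  refine subsingleton_of_forall_eq 0 fun x => ?_
  have key : ∀ s : ℕ, a ^ s • x = 0 → x = 0 := by
    intro s
    induction s with
    | zero => simp
    | succ s ih =>
      intro h
      rw [pow_succ', mul_smul] at h
      exact ih (hinj _ h)
  exact key t (hzero x)

/-- For a short exact sequence `0 → N → L → N' → 0` with `a` bijective on `L` and nilpotent on `M`,
the connecting maps are isomorphisms `Ext^i(M, N') ≅ Ext^{i+1}(M, N)`, and `Hom(M, N) = 0`. -/
theorem ext_shift {M : ModuleCat.{0} A} {N L N' : Type} [AddCommGroup N] [AddCommGroup L]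
    [AddCommGroup N'] [Module A N] [Module A L] [Module A N'] (f : N →ₗ[A] L) (g : L →ₗ[A] N')
    (hf : Function.Injective f) (hfg : Function.Exact f g) (hg : Function.Surjective g)
    (a : A) (hL : Function.Bijective fun x : L => a • x) (t : ℕ) (hM : ∀ m : M, a ^ t • m = 0) :
    Subsingleton (Abelian.Ext M (ModuleCat.of A N) 0) ∧
      ∀ i, Nonempty (Abelian.Ext M (ModuleCat.of A N) (i + 1) ≃ₗ[A]
        Abelian.Ext M (ModuleCat.of A N') i) := by
  let S : ShortComplex (ModuleCat.{0} A) :=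
    ShortComplex.mk (ModuleCat.ofHom f) (ModuleCat.ofHom g) (by
      ext x
      exact hfg.apply_apply_eq_zero x)
  have hS : S.ShortExact := ModuleCat.shortComplex_shortExact S hfg hf hg
  have hz (i : ℕ) := ext_subsingleton_of_nilpotent_of_bijective (M := M)
    (L := ModuleCat.of A L) a hL t hM i
  constructor
  · have : Subsingleton (Abelian.Ext M S.X₂ 0) := hz 0
    have := hS.mono_f
    exact (Abelian.Ext.postcomp_mk₀_injective_of_mono M S.f).subsingleton
  · intro i
    let φ : Abelian.Ext M S.X₃ i →ₗ[A] Abelian.Ext M S.X₁ (i + 1) :=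
      (Abelian.Ext.bilinearCompOfLinear A M S.X₃ S.X₁ i 1 (i + 1) rfl).flip hS.extClass
    refine ⟨(LinearEquiv.ofBijective φ ⟨?_, ?_⟩).symm⟩
    · rw [injective_iff_map_eq_zero]
      intro x hx
      obtain ⟨y, rfl⟩ := Abelian.Ext.covariant_sequence_exact₃ M hS x rfl hx
      rw [(hz i).elim y 0]
      simp
    · intro x
      exact Abelian.Ext.covariant_sequence_exact₁ M hS x ((hz (i + 1)).elim _ _) rfl

end Shift

/-! ### Coinduced modules -/

section Coind

/-- The coinduced `A`-module `Hom_R(A, N)` of an `R`-module `N`, with `(a • f) b = f (a * b)`. It is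
a type synonym of `A →ₗ[R] N`, because the latter already carries an action coming from `N`. -/
def Coind (R A N : Type) [CommRing R] [CommRing A] [Algebra R A] [AddCommGroup N] [Module R N] :
    Type := A →ₗ[R] N

namespace Coind
variable {R A N N' : Type} [CommRing R] [CommRing A] [Algebra R A]
  [AddCommGroup N] [Module R N] [AddCommGroup N'] [Module R N']

instance : AddCommGroup (Coind R A N) := inferInstanceAs (AddCommGroup (A →ₗ[R] N))

instance : FunLike (Coind R A N) A N := inferInstanceAs (FunLike (A →ₗ[R] N) A N)

instance : LinearMapClass (Coind R A N) R A N :=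
  inferInstanceAs (LinearMapClass (A →ₗ[R] N) R A N)

@[ext] theorem ext {f g : Coind R A N} (h : ∀ a, f a = g a) : f = g := DFunLike.ext _ _ h

@[simp] theorem add_apply (f g : Coind R A N) (a : A) : (f + g) a = f a + g a := rfl
@[simp] theorem zero_apply (a : A) : (0 : Coind R A N) a = 0 := rfl

instance : Module A (Coind R A N) where
  smul a f := LinearMap.comp f (LinearMap.mulLeft R a)
  one_smul f := by ext b; exact congrArg f (one_mul b)
  mul_smul a b f := by
    ext c
    change f (a * b * c) = f (b * (a * c))
    rw [mul_left_comm, mul_assoc]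
  smul_zero a := rfl
  smul_add a f g := rfl
  add_smul a b f := by
    ext c
    change f ((a + b) * c) = f (a * c) + f (b * c)
    rw [add_mul, map_add]
  zero_smul f := by
    ext c
    change f (0 * c) = 0
    rw [zero_mul, map_zero]

@[simp] theorem smul_apply (a b : A) (f : Coind R A N) : (a • f) b = f (a * b) := rfl

/-- Postcomposition with an `R₀`-linear map `N → N'`, as an `A`-linear map
`Hom_R(A, N) → Hom_{R₀}(A, N')`. The base ring may drop from `R` to `R₀`, which the residue map
`R((X⁻¹)) → R` requires, being only `R`-linear. -/
def map {R₀ : Type} [CommRing R₀] [Algebra R₀ A] [Algebra R₀ R] [IsScalarTower R₀ R A]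
    [Module R₀ N] [IsScalarTower R₀ R N] {N' : Type} [AddCommGroup N'] [Module R₀ N']
    (g : N →ₗ[R₀] N') : Coind R A N →ₗ[A] Coind R₀ A N' where
  toFun f := g ∘ₗ LinearMap.restrictScalars R₀ (f : A →ₗ[R] N)
  map_add' f f' := by ext a; exact map_add g _ _
  map_smul' _ _ := rfl

/-- An element of `R` acting bijectively on `N` acts bijectively on `Hom_R(A, N)`. -/
theorem smul_bijective (a : R) (h : Function.Bijective fun x : N => a • x) :
    Function.Bijective fun f : Coind R A N => algebraMap R A a • f := by
  have key (f : Coind R A N) (b : A) : (algebraMap R A a • f) b = a • f b := by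
    rw [smul_apply, ← Algebra.smul_def, map_smul]
  let e : N ≃ₗ[R] N := LinearEquiv.ofBijective (LinearMap.lsmul R N a) h
  constructor
  · intro f g hfg
    ext b
    apply h.1
    have := DFunLike.congr_fun hfg b
    simpa only [key] using this
  · intro f
    refine ⟨(e.symm : N →ₗ[R] N) ∘ₗ (f : A →ₗ[R] N), ?_⟩
    ext b
    exact (key _ b).trans (e.apply_symm_apply (f b))

end Coind

/-! ### The residue sequence of a polynomial ring -/

/-- Laurent series over `R` in the variable `X⁻¹`, encoded as Hahn series: the coefficient at
`i : ℤ` is that of `X^(-i)`, so only finitely many positive powers of `X` occur. -/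
def InvLaurent (R : Type) [CommRing R] : Type := HahnSeries ℤ R

namespace InvLaurent
variable (R : Type) [CommRing R]

noncomputable instance : CommRing (InvLaurent R) := inferInstanceAs (CommRing (HahnSeries ℤ R))

noncomputable instance : Algebra R (InvLaurent R) :=
  (HahnSeries.C : R →+* HahnSeries ℤ R).toAlgebra

/-- The element `X` of `R((X⁻¹))`. -/
noncomputable def u : InvLaurent R := HahnSeries.single (-1 : ℤ) (1 : R)

noncomputable instance : Algebra R[X] (InvLaurent R) := (aeval (u R)).toAlgebra

instance : IsScalarTower R R[X] (InvLaurent R) :=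
  .of_algebraMap_eq' (aeval (u R)).comp_algebraMap.symm

/-- The coefficient of `X^(-k)`; for `k = 1` it is the residue. -/
def coeff (k : ℤ) : InvLaurent R →ₗ[R] R where
  toFun f := HahnSeries.coeff f k
  map_add' _ _ := rfl
  map_smul' r f := by
    rw [Algebra.smul_def]
    exact HahnSeries.coeff_single_zero_mul

variable {R}

theorem ext {f g : InvLaurent R} (h : ∀ i, coeff R i f = coeff R i g) : f = g :=
  HahnSeries.ext (funext h)

theorem coeff_X_smul (f : InvLaurent R) (i : ℤ) :
    coeff R i ((X : R[X]) • f) = coeff R (i + 1) f := by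
  rw [Algebra.smul_def]
  have h : algebraMap R[X] (InvLaurent R) X = u R := aeval_X _
  rw [h]
  refine (HahnSeries.coeff_single_mul (R := R) (Γ' := ℤ)).trans ?_
  rw [one_mul, sub_neg_eq_add]
  rfl

theorem coeff_X_pow_smul (k : ℕ) (f : InvLaurent R) (i : ℤ) :
    coeff R i ((X ^ k : R[X]) • f) = coeff R (i + k) f := by
  induction k generalizing i with
  | zero => simp
  | succ k ih =>
    rw [pow_succ', mul_smul, coeff_X_smul, ih]
    congr 2
    push_cast
    ring

theorem coeff_algebraMap (s : R[X]) (i : ℤ) :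
    coeff R i (algebraMap R[X] (InvLaurent R) s) =
      if i ≤ 0 then s.coeff (-i).toNat else 0 := by
  rw [Algebra.algebraMap_eq_smul_one]
  induction s using Polynomial.induction_on' with
  | add p q hp hq =>
    rw [add_smul, map_add, hp, hq]
    split_ifs <;> simp
  | monomial k a =>
    rw [← C_mul_X_pow_eq_monomial, ← smul_eq_C_mul, smul_assoc, map_smul, coeff_X_pow_smul]
    have h1 : coeff R (i + k) (1 : InvLaurent R) = if i + k = 0 then 1 else 0 := by
      classical exact HahnSeries.coeff_one.trans (by congr)
    rw [h1, coeff_smul, coeff_X_pow]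
    simp only [smul_eq_mul, mul_ite, mul_one, mul_zero]
    split_ifs <;> first | rfl | omega

theorem algebraMap_injective : Function.Injective (algebraMap R[X] (InvLaurent R)) := by
  intro s t h
  ext k
  have := congrArg (coeff R (-(k : ℤ))) h
  simpa [coeff_algebraMap] using this

theorem X_smul_bijective : Function.Bijective fun f : InvLaurent R => (X : R[X]) • f := by
  constructor
  · intro f g h
    refine ext fun i => ?_
    have := congrArg (coeff R (i - 1)) h
    simpa [coeff_X_smul] using this
  · intro f
    let g : HahnSeries ℤ R := f
    let h : HahnSeries ℤ R := HahnSeries.single (1 : ℤ) (1 : R) * g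
    refine ⟨h, ext fun i => ?_⟩
    refine (coeff_X_smul _ i).trans ?_
    refine (HahnSeries.coeff_single_mul (R := R) (Γ' := ℤ)).trans ?_
    rw [one_mul, add_sub_cancel_right]
    rfl

/-- A Laurent series without negative powers of `X` is a polynomial. -/
theorem exists_algebraMap_eq (f : InvLaurent R) (hf : ∀ k : ℕ, coeff R (1 + k) f = 0) :
    ∃ s : R[X], algebraMap R[X] (InvLaurent R) s = f := by
  obtain ⟨b, hlow⟩ : ∃ b : ℤ, ∀ i < b, coeff R i f = 0 :=
    ⟨HahnSeries.order (Γ := ℤ) (R := R) f, fun i hi => HahnSeries.coeff_eq_zero_of_lt_order hi⟩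
  refine ⟨∑ k ∈ Finset.range ((-b).toNat + 1), monomial k (coeff R (-(k : ℤ)) f),
    ext fun i => ?_⟩
  rw [coeff_algebraMap]
  split_ifs with hi
  · simp only [finsetSum_coeff, coeff_monomial, Finset.sum_ite_eq', Finset.mem_range]
    split_ifs with h
    · congr 2; omega
    · exact (hlow i (by omega)).symm
  · rw [← hf (i - 1).toNat]
    congr 2
    omega

/-- The coefficients of the negative powers of `X` can be prescribed arbitrarily. -/
theorem exists_coeff_eq (c : ℕ → R) : ∃ f : InvLaurent R, ∀ k : ℕ, coeff R (1 + k) f = c k := by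
  refine ⟨HahnSeries.ofSuppBddBelow (fun i : ℤ => if 1 ≤ i then c (i - 1).toNat else 0)
    ⟨1, ?_⟩, fun k => ?_⟩
  · intro i hi
    by_contra h
    exact hi (if_neg h)
  · refine (if_pos (by omega)).trans ?_
    congr 1
    omega
end InvLaurent

variable (R A : Type) [CommRing R] [CommRing A] [Algebra R[X] A]

/-- The residue pairing `f ↦ (s ↦ Res (s f))`, from `R((X⁻¹))` to the `R`-linear dual of `R[X]`. -/
noncomputable def residueFunctional : InvLaurent R →ₗ[R[X]] Coind R R[X] R where
  toFun f := InvLaurent.coeff R 1 ∘ₗ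
    LinearMap.restrictScalars R (LinearMap.toSpanSingleton R[X] (InvLaurent R) f)
  map_add' f g := by
    ext s
    change InvLaurent.coeff R 1 (s • (f + g)) =
      InvLaurent.coeff R 1 (s • f) + InvLaurent.coeff R 1 (s • g)
    rw [smul_add, map_add]
  map_smul' s f := by
    ext t
    change InvLaurent.coeff R 1 (t • s • f) = InvLaurent.coeff R 1 ((s * t) • f)
    rw [smul_smul, mul_comm]

theorem residueFunctional_apply (f : InvLaurent R) (s : R[X]) :
    residueFunctional R f s = InvLaurent.coeff R 1 (s • f) := rfl

theorem residueFunctional_surjective : Function.Surjective (residueFunctional R) := by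
  intro ψ
  obtain ⟨f, hf⟩ := InvLaurent.exists_coeff_eq fun k => ψ (X ^ k)
  refine ⟨f, ?_⟩
  have : (residueFunctional R f : R[X] →ₗ[R] R) = ψ := by
    refine Polynomial.lhom_ext' fun k => LinearMap.ext_ring ?_
    refine (residueFunctional_apply R f _).trans ?_
    change InvLaurent.coeff R 1 ((monomial k (1 : R)) • f) = ψ (monomial k 1)
    rw [← X_pow_eq_monomial, InvLaurent.coeff_X_pow_smul, hf]
  exact this

theorem coind_residue_injective : Function.Injective
    (Coind.map (R := R[X]) (R₀ := R[X]) (A := A) (Algebra.linearMap R[X] (InvLaurent R))) := by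
  intro f g h
  ext1 a
  exact InvLaurent.algebraMap_injective (DFunLike.congr_fun h a)

variable [Algebra R A] [IsScalarTower R R[X] A]

theorem coind_residue_exact : Function.Exact
    (Coind.map (R := R[X]) (R₀ := R[X]) (A := A) (Algebra.linearMap R[X] (InvLaurent R)))
    (Coind.map (R := R[X]) (R₀ := R) (A := A) (InvLaurent.coeff R 1)) := by
  intro φ
  constructor
  · intro h
    have h1 (a : A) : ∃ s : R[X], algebraMap R[X] (InvLaurent R) s = φ a := by
      refine InvLaurent.exists_algebraMap_eq _ fun k => ?_
      rw [← InvLaurent.coeff_X_pow_smul, ← map_smul]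
      exact DFunLike.congr_fun h ((X ^ k : R[X]) • a)
    -- The polynomials chosen pointwise form a linear map, as `R[X] → R((X⁻¹))` is injective.
    choose σ hσ using h1
    refine ⟨({ toFun := σ, map_add' := fun a b => ?_, map_smul' := fun s a => ?_ } :
      A →ₗ[R[X]] R[X]),
      Coind.ext hσ⟩
    · apply InvLaurent.algebraMap_injective
      rw [map_add, hσ, hσ, hσ, map_add]
    · apply InvLaurent.algebraMap_injective
      rw [hσ, map_smul, RingHom.id_apply, smul_eq_mul, map_mul, hσ, Algebra.smul_def]
  · rintro ⟨ψ, rfl⟩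
    ext a
    exact (InvLaurent.coeff_algebraMap _ _).trans (if_neg (by norm_num))

/-- An `R`-linear `ψ : A → R` amounts to an `R[X]`-linear map `A → Hom_R(R[X], R)`, which lifts
along the surjective residue pairing because `A` is projective over `R[X]`. -/
theorem coind_residue_surjective [Module.Projective R[X] A] : Function.Surjective
    (Coind.map (R := R[X]) (R₀ := R) (A := A) (InvLaurent.coeff R 1)) := by
  intro ψ
  let ψ' : A →ₗ[R[X]] Coind R R[X] R :=
    { toFun := fun a => (ψ : A →ₗ[R] R) ∘ₗ
        LinearMap.restrictScalars R (LinearMap.toSpanSingleton R[X] A a)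
      map_add' := fun a b => by
        ext s
        exact (congrArg ψ (smul_add s a b)).trans (map_add ψ _ _)
      map_smul' := fun s a => by
        ext t
        change ψ (t • s • a) = ψ ((s * t) • a)
        rw [smul_smul, mul_comm] }
  obtain ⟨φ, hφ⟩ := Module.projective_lifting_property (residueFunctional R) ψ'
    (residueFunctional_surjective R)
  refine ⟨φ, Coind.ext fun a => ?_⟩
  have h := DFunLike.congr_fun (LinearMap.congr_fun hφ a) 1
  have h1 : residueFunctional R (φ a) 1 = InvLaurent.coeff R 1 (φ a) := by
    rw [residueFunctional_apply, one_smul]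
  have h2 : ψ' a 1 = ψ a := by
    change ψ ((1 : R[X]) • a) = ψ a
    rw [one_smul]
  exact h1.symm.trans (h.trans h2)

end Coind

/-! ### The base ring `ℤ` -/

section Base
variable (A : Type) [CommRing A]

theorem injective_QmodZ : Module.Injective ℤ QmodZ := by
  have : DivisibleBy QmodZ ℤ :=
    (Submodule.mkQ_surjective _).divisibleBy (LinearMap.range (Algebra.linearMap ℤ ℚ)).mkQ
      fun a n => map_zsmul _ n a
  exact (Module.Baer.of_divisible QmodZ).injective

/-- Coinduction preserves injectivity, since it is right adjoint to the exact restriction of scalars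
to `ℤ`. -/
theorem injective_coind_QmodZ : Module.Injective A (Coind ℤ A QmodZ) where
  out X Y _ _ _ _ f hf g := by
    let g' : X →+ QmodZ :=
      { toFun := fun x => g x 1
        map_zero' := by rw [map_zero]; rfl
        map_add' := fun x y => by rw [map_add]; rfl }
    have := injective_QmodZ
    obtain ⟨h, hh⟩ := Module.Injective.extension_property ℤ QmodZ X Y
      f.toAddMonoidHom.toIntLinearMap hf
      g'.toIntLinearMap
    have hh' (x : X) : h (f x) = g x 1 := LinearMap.congr_fun hh x
    refine ⟨{ toFun := fun y => (h ∘ₗ ((LinearMap.toSpanSingleton A Y y).restrictScalars ℤ) :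
                A →ₗ[ℤ] QmodZ)
              map_add' := fun y z => ?_
              map_smul' := fun a y => ?_ }, fun x => ?_⟩
    · ext a
      change h (a • (y + z)) = h (a • y) + h (a • z)
      rw [smul_add, map_add]
    · ext b
      change h (b • a • y) = h ((a * b) • y)
      rw [smul_smul, mul_comm]
    · ext a
      change h (a • f x) = g x a
      rw [← map_smul, hh', map_smul, Coind.smul_apply, mul_one]

/-- The adjunction `Hom_A(M, Hom_ℤ(A, ℚ/ℤ)) ≃ Hom_ℤ(M, ℚ/ℤ)`, given by evaluation at `1`. -/
noncomputable def homCoindEquiv (M : Type) [AddCommGroup M] [Module A M] :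
    (M →ₗ[A] Coind ℤ A QmodZ) ≃ₗ[A] (M →ₗ[ℤ] QmodZ) where
  toFun φ :=
    { toFun := fun m => φ m 1
      map_add' := fun x y => by rw [map_add]; rfl
      map_smul' := fun n x => by rw [map_zsmul]; rfl }
  invFun ψ :=
    { toFun := fun m => (ψ ∘ₗ ((LinearMap.toSpanSingleton A M m).restrictScalars ℤ) :
        A →ₗ[ℤ] QmodZ)
      map_add' := fun x y => by
        ext a
        change ψ (a • (x + y)) = ψ (a • x) + ψ (a • y)
        rw [smul_add, map_add]
      map_smul' := fun b x => by
        ext a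
        change ψ (a • b • x) = ψ ((b * a) • x)
        rw [smul_smul, mul_comm] }
  map_add' _ _ := rfl
  map_smul' a φ := by
    ext m
    change φ m (a * 1) = φ (a • m) 1
    rw [map_smul]
    rfl
  left_inv φ := by
    ext m a
    change φ (a • m) 1 = φ m a
    rw [map_smul, Coind.smul_apply, mul_one]
  right_inv ψ := by
    ext m
    change ψ ((1 : A) • m) = ψ m
    rw [one_smul]

theorem coind_quotient_injective : Function.Injective
    (Coind.map (R := ℤ) (R₀ := ℤ) (A := A) (Algebra.linearMap ℤ ℚ)) := by
  intro f g h
  ext1 a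
  exact Int.cast_injective (α := ℚ) (DFunLike.congr_fun h a)

theorem coind_quotient_exact : Function.Exact
    (Coind.map (R := ℤ) (R₀ := ℤ) (A := A) (Algebra.linearMap ℤ ℚ))
    (Coind.map (R := ℤ) (R₀ := ℤ) (A := A) (LinearMap.range (Algebra.linearMap ℤ ℚ)).mkQ) := by
  intro φ
  constructor
  · intro h
    have h1 (a : A) : ∃ s : ℤ, (s : ℚ) = φ a :=
      (Submodule.Quotient.mk_eq_zero _).mp (DFunLike.congr_fun h a)
    choose σ hσ using h1
    refine ⟨(AddMonoidHom.toIntLinearMap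
      { toFun := σ, map_zero' := ?_, map_add' := fun a b => ?_ } : A →ₗ[ℤ] ℤ), Coind.ext hσ⟩
    · apply Int.cast_injective (α := ℚ)
      rw [hσ, map_zero, Int.cast_zero]
    · apply Int.cast_injective (α := ℚ)
      rw [Int.cast_add, hσ, hσ, hσ, map_add]
  · rintro ⟨ψ, rfl⟩
    ext a
    exact (Submodule.Quotient.mk_eq_zero _).mpr ⟨ψ a, rfl⟩

theorem coind_quotient_surjective [Module.Projective ℤ A] : Function.Surjective
    (Coind.map (R := ℤ) (R₀ := ℤ) (A := A) (LinearMap.range (Algebra.linearMap ℤ ℚ)).mkQ) := by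
  intro ψ
  obtain ⟨φ, hφ⟩ := Module.projective_lifting_property
    (LinearMap.range (Algebra.linearMap ℤ ℚ)).mkQ (ψ : A →ₗ[ℤ] QmodZ) (Submodule.mkQ_surjective _)
  exact ⟨φ, hφ⟩

theorem natCast_smul_rat_bijective {p : ℕ} (hp : p ≠ 0) :
    Function.Bijective fun x : ℚ => (p : ℤ) • x := by
  have hp' : (p : ℚ) ≠ 0 := Nat.cast_ne_zero.mpr hp
  have : (fun x : ℚ => (p : ℤ) • x) = fun x => (p : ℚ) * x := by ext x; simp
  rw [this]
  exact mulLeft_bijective₀ _ hp'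

end Base

/-! ### Induction on the number of variables -/

theorem ext_congr {A : Type} [CommRing A] (M : ModuleCat.{0} A) {N N' : Type} [AddCommGroup N]
    [AddCommGroup N'] [Module A N] [Module A N'] (e : N ≃ₗ[A] N') (i : ℕ) :
    Nonempty (Abelian.Ext M (ModuleCat.of A N) i ≃ₗ[A] Abelian.Ext M (ModuleCat.of A N') i) := by
  obtain ⟨α⟩ : Nonempty (ModuleCat.of A N ≅ ModuleCat.of A N') := ⟨e.toModuleIso⟩
  refine ⟨LinearEquiv.ofLinearMap
    ((Abelian.Ext.mk₀ α.hom).postcompOfLinear A M (add_zero i))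
    ((Abelian.Ext.mk₀ α.inv).postcompOfLinear A M (add_zero i)) ?_ ?_⟩ <;>
  · ext x
    simp

/-- Duality in degree `k` for modules over free extensions of `R` that are torsion with respect to
`s`: for every free `R`-algebra `A` and every `A`-module `M` on which each element of `s` acts
nilpotently, `Ext_A^i(M, Hom_R(A, R))` vanishes for `i ≠ k` and is the Pontryagin dual of `M` for
`i = k`. Quantifying over `A` is what makes the induction work: the ring over which `Ext` is taken
stays fixed while `R` moves up the tower. -/
def TorsionDuality (R : Type) [CommRing R] (s : Set R) (k : ℕ) : Prop :=
  ∀ (A : Type) [CommRing A] [Algebra R A] [Module.Free R A] (M : ModuleCat.{0} A),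
    (∀ r ∈ s, ∃ t : ℕ, ∀ m : M, algebraMap R A r ^ t • m = 0) →
    (∀ i ≠ k, Subsingleton (Abelian.Ext M (ModuleCat.of A (Coind R A R)) i)) ∧
      Nonempty (Abelian.Ext M (ModuleCat.of A (Coind R A R)) k ≃ₗ[A] (M →ₗ[ℤ] QmodZ))

theorem duality_of_shift {A : Type} [CommRing A] {M : ModuleCat.{0} A} {N N' D : Type}
    [AddCommGroup N] [AddCommGroup N'] [AddCommGroup D] [Module A N] [Module A N'] [Module A D]
    {k : ℕ} (h0 : Subsingleton (Abelian.Ext M (ModuleCat.of A N) 0))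
    (h1 : ∀ i, Nonempty (Abelian.Ext M (ModuleCat.of A N) (i + 1) ≃ₗ[A]
        Abelian.Ext M (ModuleCat.of A N') i))
    (h : (∀ i ≠ k, Subsingleton (Abelian.Ext M (ModuleCat.of A N') i)) ∧
      Nonempty (Abelian.Ext M (ModuleCat.of A N') k ≃ₗ[A] D)) :
    (∀ i ≠ k + 1, Subsingleton (Abelian.Ext M (ModuleCat.of A N) i)) ∧
      Nonempty (Abelian.Ext M (ModuleCat.of A N) (k + 1) ≃ₗ[A] D) := by
  refine ⟨fun i hi => ?_, ⟨(h1 k).some.trans h.2.some⟩⟩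
  cases i with
  | zero => exact h0
  | succ i =>
    have := h.1 i (by omega)
    exact (h1 i).some.toEquiv.subsingleton

theorem torsionDuality_int {p : ℕ} (hp : p ≠ 0) : TorsionDuality ℤ {(p : ℤ)} (0 + 1) := by
  intro A _ inst _ M hM
  -- The abstract `ℤ`-algebra structure is the canonical one, which `M →ₗ[ℤ] QmodZ` refers to.
  obtain rfl : inst = Ring.toIntAlgebra A := Subsingleton.elim _ _
  obtain ⟨t, ht⟩ := hM p rfl
  have hsh := ext_shift (M := M) _ _ (coind_quotient_injective A) (coind_quotient_exact A)
    (coind_quotient_surjective A) (algebraMap ℤ A p)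
    (Coind.smul_bijective _ (natCast_smul_rat_bijective hp)) t ht
  refine duality_of_shift hsh.1 hsh.2 ⟨fun i hi => ?_, ?_⟩
  · have := injective_coind_QmodZ A
    have : Injective (ModuleCat.of A (Coind ℤ A QmodZ)) :=
      Module.injective_object_of_injective_module A _
    obtain ⟨i, rfl⟩ := Nat.exists_eq_succ_of_ne_zero hi
    exact Abelian.Ext.subsingleton_of_injective _ _ _
  · exact ⟨(Abelian.Ext.linearEquiv₀ (R := A)).trans
      ((ModuleCat.homLinearEquiv (S := A)).trans (homCoindEquiv A M))⟩

theorem TorsionDuality.polynomial {R : Type} [CommRing R] {s : Set R} {k : ℕ}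
    (h : TorsionDuality R s k) :
    TorsionDuality R[X] (insert X (Set.image C s)) (k + 1) := by
  intro A _ _ _ M hM
  let : Algebra R A := ((algebraMap R[X] A).comp C).toAlgebra
  have : IsScalarTower R R[X] A := .of_algebraMap_eq' rfl
  have : Module.Free R A := Module.Free.trans (S := R[X])
  obtain ⟨t, ht⟩ := hM X (Set.mem_insert _ _)
  have hsh := ext_shift (M := M) _ _ (coind_residue_injective R A) (coind_residue_exact R A)
    (coind_residue_surjective R A) (algebraMap R[X] A X)
    (Coind.smul_bijective _ InvLaurent.X_smul_bijective) t ht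
  exact duality_of_shift hsh.1 hsh.2
    (h A M fun r hr => hM (C r) (Set.mem_insert_of_mem _ (Set.mem_image_of_mem _ hr)))

/-- Invariance under a ring isomorphism `e : R ≃ R'`: an extension of `R'` is an extension of `R`
through `e`, and postcomposition with `e⁻¹` identifies `Hom_{R'}(A, R')` with `Hom_R(A, R)`. -/
theorem TorsionDuality.of_ringEquiv {R R' : Type} [CommRing R] [CommRing R'] (e : R ≃+* R')
    {s : Set R} {s' : Set R'} (hs : Set.image e s ⊆ s') {k : ℕ} (h : TorsionDuality R s k) :
    TorsionDuality R' s' k := by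
  intro A _ _ _ M hM
  let : Algebra R R' := e.toRingHom.toAlgebra
  let : Algebra R A := ((algebraMap R' A).comp e.toRingHom).toAlgebra
  have : IsScalarTower R R' A := .of_algebraMap_eq' rfl
  let e' : R ≃ₗ[R] R' := LinearEquiv.ofBijective (Algebra.linearMap R R') e.bijective
  have : Module.Free R R' := Module.Free.of_equiv e'
  have : Module.Free R A := Module.Free.trans (S := R')
  obtain ⟨h1, h2⟩ := h A M fun r hr => hM (e r) (hs (Set.mem_image_of_mem _ hr))
  let φ : Coind R' A R' →ₗ[A] Coind R A R :=
    Coind.map (R := R') (R₀ := R) (A := A) (e'.symm : R' →ₗ[R] R)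
  have hφ : Function.Bijective φ := by
    constructor
    · intro f g hfg
      ext a
      exact e'.symm.injective (DFunLike.congr_fun hfg a)
    · intro f
      let f' : A →ₗ[R'] R' :=
        { toFun := fun a => e (f a)
          map_add' := fun a b => by rw [map_add, map_add]
          map_smul' := fun r a => by
            obtain ⟨r, rfl⟩ := e.surjective r
            have : e r • a = r • a := by
              rw [Algebra.smul_def, Algebra.smul_def]; rfl
            rw [this, map_smul, smul_eq_mul, map_mul]
            rfl }
      refine ⟨f', Coind.ext fun a => ?_⟩
      exact e'.symm_apply_apply (f a)
  have E (i : ℕ) := ext_congr M (LinearEquiv.ofBijective φ hφ) i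
  refine ⟨fun i hi => ?_, ⟨(E k).some.trans h2.some⟩⟩
  have := h1 i hi
  exact (E i).some.toEquiv.subsingleton

theorem torsionDuality_mvPolynomial {p : ℕ} (hp : p ≠ 0) (n : ℕ) :
    TorsionDuality (MvPolynomial (Fin n) ℤ) (insert (p : MvPolynomial (Fin n) ℤ)
      (Set.range MvPolynomial.X)) (n + 1) := by
  induction n with
  | zero =>
    refine (torsionDuality_int hp).of_ringEquiv (MvPolynomial.isEmptyRingEquiv ℤ (Fin 0)).symm ?_
    rintro _ ⟨_, rfl, rfl⟩
    left
    exact map_natCast (MvPolynomial.isEmptyRingEquiv ℤ (Fin 0)).symm p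
  | succ n ih =>
    refine ih.polynomial.of_ringEquiv (MvPolynomial.finSuccEquiv ℤ n).symm.toRingEquiv ?_
    rintro _ ⟨_, rfl | ⟨_, rfl | ⟨j, rfl⟩, rfl⟩, rfl⟩
    · exact .inr ⟨0, ((MvPolynomial.finSuccEquiv ℤ n).symm_apply_eq.mpr
        MvPolynomial.finSuccEquiv_X_zero.symm).symm⟩
    · left
      rw [map_natCast, map_natCast]
    · exact .inr ⟨j.succ, ((MvPolynomial.finSuccEquiv ℤ n).symm_apply_eq.mpr
        MvPolynomial.finSuccEquiv_X_succ.symm).symm⟩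

/-- Evaluation at `1` identifies `Hom_A(A, A)` with `A`. -/
def coindSelfEquiv (A : Type) [CommRing A] : Coind A A A ≃ₗ[A] A where
  toFun f := f 1
  invFun a := LinearMap.mulLeft A a
  map_add' _ _ := rfl
  map_smul' a f := by
    rw [Coind.smul_apply, ← smul_eq_mul, map_smul]; rfl
  left_inv f := by
    ext a
    change f 1 * a = f a
    rw [mul_comm, ← smul_eq_mul, ← map_smul, smul_eq_mul, mul_one]
  right_inv a := mul_one a

end ExtDuality

/-- Let `p` be a prime, `A = ℤ[x₁, …, xₙ]`, `𝔪 = (p, x₁, …, xₙ)`, and `M` a finitely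
generated `A`-module annihilated by some power of `𝔪`.  Then `Ext_A^i(M, A) = 0` for
`i ≠ n + 1`, and `Ext_A^{n+1}(M, A)` is isomorphic, as an `A`-module, to the Pontryagin
dual `Hom_ℤ(M, ℚ/ℤ)` (with `A` acting through its action on `M`). -/
theorem intPolynomial_ext_duality_of_torsion (p : ℕ) (hp : p.Prime) (n : ℕ)
    (M : Type) [AddCommGroup M] [Module (MvPolynomial (Fin n) ℤ) M]
    [Module.Finite (MvPolynomial (Fin n) ℤ) M]
    (htor : ∃ t : ℕ, ∀ a ∈ (Ideal.span
        (insert ((p : MvPolynomial (Fin n) ℤ))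
          (Set.range (MvPolynomial.X : Fin n → MvPolynomial (Fin n) ℤ)))) ^ t,
        ∀ m : M, a • m = 0) :
    (∀ i : ℕ, i ≠ n + 1 → Subsingleton (extA (MvPolynomial (Fin n) ℤ) i M
        (MvPolynomial (Fin n) ℤ))) ∧
      Nonempty (extA (MvPolynomial (Fin n) ℤ) (n + 1) M (MvPolynomial (Fin n) ℤ)
        ≃ₗ[MvPolynomial (Fin n) ℤ] (M →ₗ[ℤ] QmodZ)) := by
  have hdual := ExtDuality.torsionDuality_mvPolynomial hp.ne_zero n (MvPolynomial (Fin n) ℤ)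
    (ModuleCat.of _ M) fun r hr => by
      obtain ⟨t, ht⟩ := htor
      exact ⟨t, ht _ (Ideal.pow_mem_pow (Ideal.subset_span hr) t)⟩
  have E (i : ℕ) : Nonempty (extA (MvPolynomial (Fin n) ℤ) i M (MvPolynomial (Fin n) ℤ)
      ≃ₗ[MvPolynomial (Fin n) ℤ] Abelian.Ext (ModuleCat.of _ M) (ModuleCat.of _
        (ExtDuality.Coind (MvPolynomial (Fin n) ℤ) (MvPolynomial (Fin n) ℤ)
          (MvPolynomial (Fin n) ℤ))) i) :=
    ⟨(ExtDuality.ext_bridge _ _ i).some.trans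
      (ExtDuality.ext_congr _ (ExtDuality.coindSelfEquiv _).symm i).some⟩
  refine ⟨fun i hi => ?_, ⟨(E (n + 1)).some.trans hdual.2.some⟩⟩
  have := hdual.1 i hi
  exact (E i).some.toEquiv.subsingleton
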